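/- The invariant subalgebra $A_0$ is free as a module over the polynomial ring $k[T_0,\dots,T_n]$ (acting on $A$ via the $k$-algebra map $T_i \mapsto x_iy_i$) with basis $\{1\} \cup \{u^r : r \ge 1\} \cup \{v^s : s \ge 1\}$. -/

import Mathlib

open MvPolynomial

noncomputable section

/-- The variables of `A = k[x₀,…,xₙ,y₀,…,yₙ]`: `Sum.inl i` is `xᵢ`, `Sum.inr i` is `yᵢ`. -/
abbrev Vars (n : ℕ) : Type := Fin (n + 1) ⊕ Fin (n + 1)

/-- The `l`-th weight of a monomial `∏ xᵢ^{cᵢ} yᵢ^{dᵢ}`, for `l ∈ {1,…,n}` encoded as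
`l : Fin n` (representing the index `l+1`): it is `c_{l-1} - c_l - d_{l-1} + d_l`. -/
def wt (n : ℕ) (σ : Vars n →₀ ℕ) (l : Fin n) : ℤ :=
  (σ (Sum.inl l.castSucc) : ℤ) - (σ (Sum.inl l.succ) : ℤ)
    - (σ (Sum.inr l.castSucc) : ℤ) + (σ (Sum.inr l.succ) : ℤ)

/-- The weight space `A_χ`. -/
def wtSpace (k : Type) [Field k] (n : ℕ) (χ : Fin n → ℤ) : Set (MvPolynomial (Vars n) k) :=
  {p | ∀ σ ∈ p.support, ∀ l : Fin n, wt n σ l = χ l}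

/-- `A` is an algebra (hence a module) over `R' = k[T₀,…,Tₙ]` via `Tᵢ ↦ xᵢyᵢ`. -/
instance polyAlg (k : Type) [Field k] (n : ℕ) :
    Algebra (MvPolynomial (Fin (n + 1)) k) (MvPolynomial (Vars n) k) :=
  ((aeval fun i : Fin (n + 1) =>
      (X (Sum.inl i) * X (Sum.inr i) : MvPolynomial (Vars n) k)) :
    MvPolynomial (Fin (n + 1)) k →ₐ[k] MvPolynomial (Vars n) k).toRingHom.toAlgebra

/-- The family `{1} ∪ {uʳ : r ≥ 1} ∪ {vˢ : s ≥ 1}`, indexed by `ℤ`: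
`z ↦ u^z` for `z ≥ 0` (so `z = 0` gives `1`) and `z ↦ v^{-z}` for `z < 0`. -/
def basisElt (k : Type) [Field k] (n : ℕ) (z : ℤ) : MvPolynomial (Vars n) k :=
  if 0 ≤ z then (∏ i, X (Sum.inl i)) ^ z.toNat else (∏ i, X (Sum.inr i)) ^ (-z).toNat

/-!
The monomials `T^τ` form a `k`-basis of `k[T₀,…,Tₙ]`, so it suffices to look at the products of `T^τ`
with the elements `uʳ`, `vˢ`. Each of them is a single monomial of `A`, and a monomial
`∏ xᵢ^{cᵢ} yᵢ^{dᵢ}` arises in this way for exactly one `τ` and one element of the family precisely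
when `cᵢ - dᵢ = z` does not depend on `i`: take `τᵢ = min cᵢ dᵢ`, with `u^z` or `v^{-z}` according
to the sign of `z`. The weights of a monomial are the consecutive differences of the `cᵢ - dᵢ`.
-/

theorem linearIndependent_of_linearIndependent_basis_smul {R S M ι κ : Type*} [Semiring R]
    [Semiring S] [AddCommMonoid M] [Module R S] [Module S M] [Module R M] [IsScalarTower R S M]
    [IsScalarTower R S S] (b : Module.Basis ι R S) {v : κ → M}
    (h : LinearIndependent R fun p : ι × κ => b p.1 • v p.2) : LinearIndependent S v := by
  let B : Module.Basis (ι × κ) R (κ →₀ S) := b.smulTower Finsupp.basisSingleOne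
  have factor : Finsupp.linearCombination R (fun p : ι × κ => b p.1 • v p.2) =
      (Finsupp.linearCombination S v).restrictScalars R ∘ₗ B.repr.symm.toLinearMap := by
    ext p
    simp [B]
  rw [LinearIndependent, factor] at h
  exact (B.repr.symm.injective_comp _).1 h

section Exponents

variable (ι : Type*)

/-- The exponents of the monomials `∏ xᵢ^{cᵢ} yᵢ^{dᵢ}` whose differences `cᵢ - dᵢ` are all equal;
the condition is stated additively to stay in `ℕ`. -/
def balancedExponents : Set (ι ⊕ ι →₀ ℕ) :=
  {σ | ∀ i j, σ (Sum.inl i) + σ (Sum.inr j) = σ (Sum.inl j) + σ (Sum.inr i)}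

variable [Finite ι]

/-- The exponent of the monomial `u^z` if `z ≥ 0` and `v^{-z}` if `z < 0`; at least one of the two
truncations `z.toNat` and `(-z).toNat` vanishes. -/
def uvExponent (z : ℤ) : ι ⊕ ι →₀ ℕ :=
  Finsupp.equivFunOnFinite.symm (Sum.elim (fun _ => z.toNat) fun _ => (-z).toNat)

variable {ι}

@[simp]
theorem uvExponent_inl (z : ℤ) (i : ι) : uvExponent ι z (Sum.inl i) = z.toNat := rfl

@[simp]
theorem uvExponent_inr (z : ℤ) (i : ι) : uvExponent ι z (Sum.inr i) = (-z).toNat := rfl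

variable (ι) [Nonempty ι]

theorem sumElim_add_uvExponent_injective :
    Function.Injective fun p : (ι →₀ ℕ) × ℤ => p.1.sumElim p.1 + uvExponent ι p.2 := by
  rintro ⟨τ, z⟩ ⟨ρ, w⟩ h
  have hx (i : ι) : τ i + z.toNat = ρ i + w.toNat := by
    simpa using DFunLike.congr_fun h (Sum.inl i)
  have hy (i : ι) : τ i + (-z).toNat = ρ i + (-w).toNat := by
    simpa using DFunLike.congr_fun h (Sum.inr i)
  obtain rfl : z = w := by
    have i := Classical.arbitrary ι
    have := hx i
    have := hy i
    omega
  obtain rfl : τ = ρ := Finsupp.ext fun i => Nat.add_right_cancel (hx i)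
  rfl

theorem range_sumElim_add_uvExponent :
    Set.range (fun p : (ι →₀ ℕ) × ℤ => p.1.sumElim p.1 + uvExponent ι p.2) =
      balancedExponents ι := by
  ext σ
  constructor
  · rintro ⟨⟨τ, z⟩, rfl⟩ i j
    simp only [Finsupp.add_apply, Finsupp.sumElim_inl, Finsupp.sumElim_inr, uvExponent_inl,
      uvExponent_inr]
    ring
  · intro hσ
    let i₀ := Classical.arbitrary ι
    let τ : ι →₀ ℕ :=
      Finsupp.equivFunOnFinite.symm fun i => min (σ (Sum.inl i)) (σ (Sum.inr i))
    refine ⟨(τ, σ (Sum.inl i₀) - σ (Sum.inr i₀)), Finsupp.ext ?_⟩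
    rintro (i | i) <;>
    · have := hσ i i₀
      simp only [Finsupp.add_apply, Finsupp.sumElim_inl, Finsupp.sumElim_inr, uvExponent_inl,
        uvExponent_inr, Finsupp.equivFunOnFinite_symm_apply_apply, τ]
      omega

end Exponents

section Monomials

variable (R ι : Type*) [CommSemiring R]

/-- The family `{1} ∪ {uʳ : r ≥ 1} ∪ {vˢ : s ≥ 1}` of `basisElt`, for variables indexed by any
finite type: `z ↦ u^z` for `z ≥ 0` and `z ↦ v^{-z}` for `z < 0`. -/
def uvPow [Fintype ι] (z : ℤ) : MvPolynomial (ι ⊕ ι) R :=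
  if 0 ≤ z then (∏ i, X (Sum.inl i)) ^ z.toNat else (∏ i, X (Sum.inr i)) ^ (-z).toNat

theorem uvPow_eq_monomial [Fintype ι] (z : ℤ) : uvPow R ι z = monomial (uvExponent ι z) 1 := by
  rw [monomial_eq, Finsupp.prod_fintype _ _ fun _ => pow_zero _, Fintype.prod_sum_type]
  simp only [C_1, one_mul, uvExponent_inl, uvExponent_inr, Finset.prod_pow, uvPow]
  split_ifs with hz
  · rw [Int.toNat_of_nonpos (neg_nonpos.2 hz), pow_zero, mul_one]
  · rw [Int.toNat_of_nonpos (not_le.1 hz).le, pow_zero, one_mul]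

variable {R ι}
variable [Algebra (MvPolynomial ι R) (MvPolynomial (ι ⊕ ι) R)]
  [IsScalarTower R (MvPolynomial ι R) (MvPolynomial (ι ⊕ ι) R)]

theorem algebraMap_monomial_eq_monomial_sumElim
    (hX : ∀ i, algebraMap (MvPolynomial ι R) (MvPolynomial (ι ⊕ ι) R) (X i) =
      X (Sum.inl i) * X (Sum.inr i)) (τ : ι →₀ ℕ) (c : R) :
    algebraMap (MvPolynomial ι R) (MvPolynomial (ι ⊕ ι) R) (monomial τ c) =
      monomial (τ.sumElim τ) c := by
  rw [monomial_eq, map_mul, ← algebraMap_eq, ← IsScalarTower.algebraMap_apply, algebraMap_eq,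
    map_finsuppProd, monomial_eq, Finsupp.prod_sumElim, ← Finsupp.prod_mul]
  simp only [map_pow, hX, mul_pow, Function.comp_apply]

theorem basisMonomials_smul_uvPow [Fintype ι]
    (hX : ∀ i, algebraMap (MvPolynomial ι R) (MvPolynomial (ι ⊕ ι) R) (X i) =
      X (Sum.inl i) * X (Sum.inr i)) (τ : ι →₀ ℕ) (z : ℤ) :
    basisMonomials ι R τ • uvPow R ι z = monomial (τ.sumElim τ + uvExponent ι z) 1 := by
  rw [coe_basisMonomials, Algebra.smul_def, algebraMap_monomial_eq_monomial_sumElim hX,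
    uvPow_eq_monomial, monomial_mul, one_mul]

variable [Fintype ι] [Nonempty ι]

theorem linearIndependent_uvPow
    (hX : ∀ i, algebraMap (MvPolynomial ι R) (MvPolynomial (ι ⊕ ι) R) (X i) =
      X (Sum.inl i) * X (Sum.inr i)) :
    LinearIndependent (MvPolynomial ι R) (uvPow R ι) := by
  apply linearIndependent_of_linearIndependent_basis_smul (basisMonomials ι R)
  simp only [basisMonomials_smul_uvPow hX]
  exact (basisMonomials (ι ⊕ ι) R).linearIndependent.comp _ (sumElim_add_uvExponent_injective ι)

theorem restrictScalars_span_range_uvPow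
    (hX : ∀ i, algebraMap (MvPolynomial ι R) (MvPolynomial (ι ⊕ ι) R) (X i) =
      X (Sum.inl i) * X (Sum.inr i)) :
    (Submodule.span (MvPolynomial ι R) (Set.range (uvPow R ι))).restrictScalars R =
      restrictSupport R (balancedExponents ι) := by
  rw [← Submodule.span_smul_of_span_eq_top (basisMonomials ι R).span_eq, Set.range_smul_range,
    restrictSupport_eq_span, ← range_sumElim_add_uvExponent, ← Set.range_comp]
  simp only [basisMonomials_smul_uvPow hX, Function.comp_def]

theorem stmt2_general
    (hX : ∀ i, algebraMap (MvPolynomial ι R) (MvPolynomial (ι ⊕ ι) R) (X i) =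
      X (Sum.inl i) * X (Sum.inr i)) :
    LinearIndependent (MvPolynomial ι R) (uvPow R ι) ∧
    (Submodule.span (MvPolynomial ι R) (Set.range (uvPow R ι)) : Set (MvPolynomial (ι ⊕ ι) R)) =
      restrictSupport R (balancedExponents ι) :=
  ⟨linearIndependent_uvPow hX, congrArg SetLike.coe (restrictScalars_span_range_uvPow hX)⟩

end Monomials

theorem forall_wt_eq_zero_iff {n : ℕ} {σ : Vars n →₀ ℕ} :
    (∀ l, wt n σ l = 0) ↔ σ ∈ balancedExponents (Fin (n + 1)) := by
  constructor
  · intro h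
    have diff_eq (i : Fin (n + 1)) :
        (σ (Sum.inl i) : ℤ) - σ (Sum.inr i) = σ (Sum.inl 0) - σ (Sum.inr 0) := by
      induction i using Fin.induction with
      | zero => rfl
      | succ l ih =>
        have := h l
        rw [wt] at this
        omega
    intro i j
    have := diff_eq i
    have := diff_eq j
    omega
  · intro h l
    have := h l.castSucc l.succ
    rw [wt]
    omega

theorem wtSpace_zero_eq_restrictSupport (k : Type) [Field k] (n : ℕ) :
    wtSpace k n 0 = restrictSupport k (balancedExponents (Fin (n + 1))) :=
  Set.ext fun _ => forall₂_congr fun _ _ => forall_wt_eq_zero_iff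

instance polyAlg.isScalarTower (k : Type) [Field k] (n : ℕ) :
    IsScalarTower k (MvPolynomial (Fin (n + 1)) k) (MvPolynomial (Vars n) k) :=
  .of_algebraMap_eq fun c => (aeval_C _ c).symm

/-- The invariant subalgebra `A₀` is free as a module over `k[T₀,…,Tₙ]` (acting via
`Tᵢ ↦ xᵢyᵢ`) with basis `{1} ∪ {uʳ : r ≥ 1} ∪ {vˢ : s ≥ 1}`: the family is linearly
independent over `k[T₀,…,Tₙ]` and its `k[T₀,…,Tₙ]`-span is exactly `A₀`. -/
theorem stmt2 (k : Type) [Field k] (n : ℕ) (hn : 1 ≤ n) :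
    LinearIndependent (MvPolynomial (Fin (n + 1)) k) (basisElt k n) ∧
    (↑(Submodule.span (MvPolynomial (Fin (n + 1)) k) (Set.range (basisElt k n))) :
        Set (MvPolynomial (Vars n) k)) = wtSpace k n 0 := by
  rw [wtSpace_zero_eq_restrictSupport]
  exact stmt2_general fun i => aeval_X _ i
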